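/- Let m ≥ 1 and let ∞ > s₁ ≥ s₂ ≥ ⋯ ≥ s_m ≥ 0 be real numbers. Then the iterated integral ∫_{s₁}^{∞} dt₁ ∫_{s₂}^{s₁} dt₂ ⋯ ∫_{s_m}^{s_{m−1}} dt_m ∫_{0}^{s_m} dt_{m+1} ∏_{k=1}^{m+1} e^{−t_k²/2} · ∏_{1≤j<k≤m+1} (t_j² − t_k²) equals √(π/2) · ∏_{k=1}^{m} s_k e^{−s_k²/2} · ∏_{1≤j<k≤m} (s_j² − s_k²). -/

import Mathlib

open MeasureTheory

/-!
Multiplying a Vandermonde product in `-t_k²` by `∏ k, w (t_k)`, where `w x = exp (-x² / 2)`, gives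
the determinant of any family `w (t) * P_c (-t²)` with `P_c` monic of degree `c`. The variables then
separate, so that the integral over a box is the determinant of one-dimensional integrals, and
column operations turn the interlacing intervals into the nested sets `(0, ∞)`, `(0, s₁]`, …,
`(0, s_m]`.

For `P_0 = 1` and `w (x) * P_{c+1} (-x²)` the derivative of `x * w (x) * (-x²)^c`, the column of
`(0, ∞)` is `(√(π/2), 0, …, 0)`. Deleting the first row and column leaves the determinant of
`s_k * w (s_k) * (-s_k²)^c`, again a weighted Vandermonde determinant.
-/

section Reindex

variable {M : Type*} [CommMonoid M]

theorem prod_Icc_one_eq_prod_fin (m : ℕ) (f : ℕ → M) :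
    ∏ k ∈ Finset.Icc 1 m, f k = ∏ k : Fin m, f (k + 1) := by
  rw [Fin.prod_univ_eq_prod_range (fun k => f (k + 1)), Finset.range_eq_Ico, Finset.prod_Ico_add']
  rfl

theorem prod_Ico_one_eq_prod_Iio {m : ℕ} (k : Fin m) (f : ℕ → M) :
    ∏ j ∈ Finset.Ico 1 ((k : ℕ) + 1), f j = ∏ j ∈ Finset.Iio k, f (j + 1) := by
  have hmap := Finset.prod_map (Finset.Iio k) Fin.valEmbedding fun j => f (j + 1)
  rw [Fin.map_valEmbedding_Iio, Nat.Iio_eq_range, Finset.range_eq_Ico,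
    Finset.prod_Ico_add'] at hmap
  simpa using hmap

end Reindex

section Determinant

variable {R : Type*} [CommRing R] {n : ℕ}

theorem det_eq_of_forall_col_eq_smul_add_succ {A B : Matrix (Fin (n + 1)) (Fin (n + 1)) R}
    (c : Fin n → R) (A_last : ∀ i, A i (Fin.last n) = B i (Fin.last n))
    (A_castSucc : ∀ i (j : Fin n), A i j.castSucc = B i j.castSucc + c j * A i j.succ) :
    A.det = B.det := by
  rw [← Matrix.det_submatrix_equiv_self Fin.revPerm A,
    ← Matrix.det_submatrix_equiv_self Fin.revPerm B]
  refine Matrix.det_eq_of_forall_col_eq_smul_add_pred (fun j => c j.rev) (fun i => ?_)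
    fun i j => ?_
  · simp [A_last]
  · simp [Fin.rev_succ, Fin.rev_castSucc, A_castSucc]

theorem det_of_col_zero_succ_eq_zero (A : Matrix (Fin (n + 1)) (Fin (n + 1)) R)
    (hA : ∀ i : Fin n, A i.succ 0 = 0) :
    A.det = A 0 0 * (A.submatrix Fin.succ Fin.succ).det := by
  rw [Matrix.det_succ_column_zero, Fin.sum_univ_succ]
  simp [hA]

theorem prod_prod_Iio_sub_eq_det_vandermonde (v : Fin n → R) :
    ∏ k, ∏ j ∈ Finset.Iio k, (v k - v j) = (Matrix.vandermonde v).det := by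
  rw [Matrix.det_vandermonde]
  exact Finset.prod_comm' (by simp)

theorem prod_mul_prod_prod_Iio_sub_eq_det (w v : Fin n → R) (p : Fin n → Polynomial R)
    (hdeg : ∀ i, (p i).natDegree = i) (hmonic : ∀ i, (p i).Monic) :
    (∏ k, w k) * ∏ k, ∏ j ∈ Finset.Iio k, (v k - v j) =
      (Matrix.of fun c i => w i * (p c).eval (v i)).det := by
  rw [prod_prod_Iio_sub_eq_det_vandermonde,
    Matrix.det_eval_matrixOfPolynomials_eq_det_vandermonde v p hdeg hmonic,
    ← Matrix.det_mul_column, ← Matrix.det_transpose]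
  rfl

theorem prod_mul_prod_prod_Iio_sub_eq_det_pow (w v : Fin n → R) :
    (∏ k, w k) * ∏ k, ∏ j ∈ Finset.Iio k, (v k - v j) =
      (Matrix.of fun c i : Fin n => w i * v i ^ (c : ℕ)).det := by
  rw [prod_prod_Iio_sub_eq_det_vandermonde, ← Matrix.det_mul_column, ← Matrix.det_transpose]
  rfl

end Determinant

section Integral

variable {𝕜 : Type*} [RCLike 𝕜]

theorem integral_pi_det_eq_det_integral {ι : Type*} [Fintype ι] [DecidableEq ι] {α : ι → Type*}
    [∀ j, MeasurableSpace (α j)] (μ : ∀ j, Measure (α j)) [∀ j, SigmaFinite (μ j)]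
    (f : ι → ∀ j, α j → 𝕜) (hf : ∀ i j, Integrable (f i j) (μ j)) :
    ∫ x, (Matrix.of fun i j => f i j (x j)).det ∂Measure.pi μ =
      (Matrix.of fun i j => ∫ y, f i j y ∂μ j).det := by
  simp only [Matrix.det_apply', Matrix.of_apply]
  rw [integral_finsetSum]
  · simp_rw [integral_const_mul, integral_fintype_prod_eq_prod]
  · exact fun σ _ => (Integrable.fintype_prod_dep fun j => hf (σ j) j).const_mul _

theorem setIntegral_pi_det_of_ae_eq_sdiff {α : Type*} [MeasurableSpace α] {μ : Measure α}
    [SigmaFinite μ] {m : ℕ} {I J : Fin (m + 1) → Set α} (f : Fin (m + 1) → α → 𝕜)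
    (hf : ∀ c, IntegrableOn (f c) (J 0) μ) (hJ : ∀ i, MeasurableSet (J i)) (hanti : Antitone J)
    (hlast : I (Fin.last m) =ᵐ[μ] J (Fin.last m))
    (hdiff : ∀ k : Fin m, I k.castSucc =ᵐ[μ] (J k.castSucc \ J k.succ : Set α)) :
    ∫ t in Set.univ.pi I, (Matrix.of fun c i => f c (t i)).det ∂(Measure.pi fun _ => μ) =
      (Matrix.of fun c i => ∫ x in J i, f c x ∂μ).det := by
  have hfJ (c i) : IntegrableOn (f c) (J i) μ := (hf c).mono_set (hanti (Fin.zero_le i))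
  have hfI (c i) : IntegrableOn (f c) (I i) μ := by
    induction i using Fin.lastCases with
    | last => exact (hfJ c _).congr_set_ae hlast
    | cast k => exact ((hfJ c k.castSucc).mono_set Set.sdiff_subset).congr_set_ae (hdiff k)
  rw [Measure.restrict_pi_pi,
    integral_pi_det_eq_det_integral (fun i => μ.restrict (I i)) (fun c _ => f c) hfI]
  symm
  refine det_eq_of_forall_col_eq_smul_add_succ 1 (fun c => ?_) fun c k => ?_
  · exact (setIntegral_congr_set hlast).symm
  · have hsub : J k.succ ⊆ J k.castSucc := hanti k.castSucc_le_succ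
    simp [setIntegral_congr_set (hdiff k), setIntegral_sdiff (hJ k.succ) (hfJ c k.castSucc) hsub]

end Integral

section Interlacing

/-- The range of the variable `t_{i+1}` of the iterated integral, for `i ≤ m`: the interval
`(s_{i+1}, s_i)`, where `s_0` stands for `∞` and `s_{m+1}` for `0`. -/
def interlacingInterval (m : ℕ) (s : ℕ → ℝ) (i : ℕ) : Set ℝ :=
  {x | (if i < m then s (i + 1) else 0) < x ∧ (0 < i → x < s i)}

/-- The part of `(0, ∞)` up to `s_i`, where `s_0` stands for `∞`. Consecutive differences are, up to
endpoints, the intervals over which the variables range. The right endpoint is included so that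
`(0, ∞) \ (0, s_1]` is exactly `(s_1, ∞)`. -/
def positiveInitial (s : ℕ → ℝ) : ℕ → Set ℝ
  | 0 => Set.Ioi 0
  | i + 1 => Set.Ioc 0 (s (i + 1))

variable {m : ℕ} {s : ℕ → ℝ}

theorem measurableSet_positiveInitial (s : ℕ → ℝ) (i : ℕ) :
    MeasurableSet (positiveInitial s i) := by
  cases i with
  | zero => exact measurableSet_Ioi
  | succ i => exact measurableSet_Ioc

theorem antitone_positiveInitial (hs : AntitoneOn s (Set.Icc 1 m)) :
    Antitone fun i : Fin (m + 1) => positiveInitial s i := by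
  refine Fin.antitone_iff_succ_le.2 fun ⟨k, hk⟩ => ?_
  cases k with
  | zero => exact Set.Ioc_subset_Ioi_self
  | succ k =>
    exact Set.Ioc_subset_Ioc_right
      (hs ⟨k.succ_pos, hk.le⟩ ⟨(k + 1).succ_pos, hk⟩ (k + 1).le_succ)

theorem positiveInitial_zero_sdiff_one (hs : 0 ≤ s 1) :
    positiveInitial s 0 \ positiveInitial s 1 = Set.Ioi (s 1) := by
  rw [positiveInitial, positiveInitial, Set.Ioi_sdiff_Ioc, max_eq_right hs]

theorem positiveInitial_succ_sdiff_succ {k : ℕ} (hs : 0 ≤ s (k + 2)) :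
    positiveInitial s (k + 1) \ positiveInitial s (k + 2) = Set.Ioc (s (k + 2)) (s (k + 1)) := by
  ext x
  simp only [positiveInitial, Set.mem_sdiff, Set.mem_Ioc]
  grind

theorem interlacingInterval_self_ae_eq (m : ℕ) (s : ℕ → ℝ) :
    interlacingInterval m s m =ᵐ[volume] positiveInitial s m := by
  cases m with
  | zero =>
    have h : interlacingInterval 0 s 0 = Set.Ioi 0 := by simp [interlacingInterval, Set.Ioi]
    exact Filter.EventuallyEq.of_eq h
  | succ m =>
    have h : interlacingInterval (m + 1) s (m + 1) = Set.Ioo 0 (s (m + 1)) := by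
      simp [interlacingInterval, Set.Ioo]
    exact h ▸ Ioo_ae_eq_Ioc

theorem interlacingInterval_ae_eq_sdiff {k : ℕ} (hk : k < m) (hs : 0 ≤ s (k + 1)) :
    interlacingInterval m s k =ᵐ[volume]
      (positiveInitial s k \ positiveInitial s (k + 1) : Set ℝ) := by
  cases k with
  | zero =>
    have h : interlacingInterval m s 0 = Set.Ioi (s 1) := by
      simp [interlacingInterval, hk, Set.Ioi]
    exact Filter.EventuallyEq.of_eq (h.trans (positiveInitial_zero_sdiff_one hs).symm)
  | succ k =>
    have h : interlacingInterval m s (k + 1) = Set.Ioo (s (k + 2)) (s (k + 1)) := by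
      simp [interlacingInterval, hk, Set.Ioo]
    rw [h, positiveInitial_succ_sdiff_succ hs]
    exact Ioo_ae_eq_Ioc

end Interlacing

section Gauss

theorem integrable_exp_neg_mul_sq_mul_eval {b : ℝ} (hb : 0 < b) (p : Polynomial ℝ) :
    Integrable fun x => Real.exp (-b * x ^ 2) * p.eval x := by
  simp_rw [Polynomial.eval_eq_sum_range, Finset.mul_sum]
  refine integrable_finsetSum _ fun n _ => ?_
  have hn : (-1 : ℝ) < n := neg_one_lt_zero.trans_le n.cast_nonneg
  have hterm : (fun x : ℝ => Real.exp (-b * x ^ 2) * (p.coeff n * x ^ n)) =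
      fun x => p.coeff n * (x ^ (n : ℝ) * Real.exp (-b * x ^ 2)) := by
    funext x
    rw [Real.rpow_natCast]
    ring
  rw [hterm]
  exact (integrable_rpow_mul_exp_neg_mul_sq hb hn).const_mul _

open Polynomial in
/-- The monic polynomials `P_c` of degree `c` with `P_0 = 1` and, for `w x = exp (-x² / 2)`,
`w (x) * P_{c+1} (-x²)` the derivative of `x * w (x) * (-x²)^c`. -/
noncomputable def gaussPoly : ℕ → ℝ[X]
  | 0 => 1
  | c + 1 => X ^ (c + 1) + C (2 * (c : ℝ) + 1) * X ^ c

/-- The functions `exp (-x² / 2) * P_c (-x²)` whose determinant at the points `t_i` is the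
integrand. -/
noncomputable def gaussFun (c : ℕ) (x : ℝ) : ℝ :=
  Real.exp (-x ^ 2 / 2) * (gaussPoly c).eval (-x ^ 2)

theorem degree_C_mul_X_pow_lt_succ {R : Type*} [Semiring R] (a : R) (c : ℕ) :
    (Polynomial.C a * Polynomial.X ^ c).degree < ((c + 1 : ℕ) : WithBot ℕ) :=
  (Polynomial.degree_C_mul_X_pow_le c a).trans_lt (Nat.cast_lt.2 c.lt_succ_self)

theorem monic_gaussPoly (c : ℕ) : (gaussPoly c).Monic := by
  cases c with
  | zero => exact Polynomial.monic_one
  | succ c => exact Polynomial.monic_X_pow_add (degree_C_mul_X_pow_lt_succ _ c)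

theorem natDegree_gaussPoly (c : ℕ) : (gaussPoly c).natDegree = c := by
  cases c with
  | zero => exact Polynomial.natDegree_one
  | succ c =>
    have hlt := (degree_C_mul_X_pow_lt_succ (2 * (c : ℝ) + 1) c).trans_eq
      (Polynomial.degree_X_pow (R := ℝ) (c + 1)).symm
    rw [gaussPoly, Polynomial.natDegree_add_eq_left_of_degree_lt hlt, Polynomial.natDegree_X_pow]

theorem prod_exp_mul_prod_prod_Iio_sub_eq_det_gaussFun {n : ℕ} (t : Fin n → ℝ) :
    (∏ k, Real.exp (-(t k) ^ 2 / 2)) * ∏ k, ∏ j ∈ Finset.Iio k, ((t j) ^ 2 - (t k) ^ 2) =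
      (Matrix.of fun c i : Fin n => gaussFun c (t i)).det := by
  simpa only [neg_sub_neg] using!
    prod_mul_prod_prod_Iio_sub_eq_det (fun k => Real.exp (-(t k) ^ 2 / 2)) (fun k => -(t k) ^ 2)
    (fun c => gaussPoly c) (fun c => natDegree_gaussPoly c) fun c => monic_gaussPoly c

theorem integrable_gaussFun (c : ℕ) : Integrable (gaussFun c) := by
  convert integrable_exp_neg_mul_sq_mul_eval one_half_pos
    ((gaussPoly c).comp (-Polynomial.X ^ 2)) using 2 with x
  have hexp : -x ^ 2 / 2 = -(1 / 2) * x ^ 2 := by ring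
  simp [gaussFun, Polynomial.eval_comp, hexp]

theorem integrable_mul_exp_mul_neg_sq_pow (c : ℕ) :
    Integrable fun x : ℝ => x * Real.exp (-x ^ 2 / 2) * (-x ^ 2) ^ c := by
  convert integrable_exp_neg_mul_sq_mul_eval one_half_pos
    (Polynomial.X * (-Polynomial.X ^ 2) ^ c) using 2 with x
  have hexp : -x ^ 2 / 2 = -(1 / 2) * x ^ 2 := by ring
  simp only [hexp, Polynomial.eval_mul, Polynomial.eval_X, Polynomial.eval_pow,
    Polynomial.eval_neg]
  ring

theorem hasDerivAt_mul_exp_mul_neg_sq_pow (c : ℕ) (x : ℝ) :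
    HasDerivAt (fun x : ℝ => x * Real.exp (-x ^ 2 / 2) * (-x ^ 2) ^ c) (gaussFun (c + 1) x) x := by
  have hsq : HasDerivAt (fun x : ℝ => -x ^ 2) (-(2 * x)) x := by
    simpa using (hasDerivAt_pow 2 x).fun_neg
  have hexp := (hsq.div_const 2).exp
  refine (((hasDerivAt_id' x).fun_mul hexp).fun_mul (hsq.fun_pow c)).congr_deriv ?_
  simp only [gaussFun, gaussPoly, Polynomial.eval_add, Polynomial.eval_mul, Polynomial.eval_pow,
    Polynomial.eval_X, Polynomial.eval_C]
  cases c with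
  | zero => simp only [Nat.cast_zero]; ring
  | succ c => simp only [Nat.cast_succ, Nat.add_sub_cancel]; ring

theorem setIntegral_Ioi_gaussFun_zero : ∫ x in Set.Ioi 0, gaussFun 0 x = √(Real.pi / 2) := by
  have hfun : gaussFun 0 = fun x => Real.exp (-(1 / 2) * x ^ 2) := by
    funext x
    have hexp : -x ^ 2 / 2 = -(1 / 2) * x ^ 2 := by ring
    simp [gaussFun, gaussPoly, hexp]
  have hsqrt : √(Real.pi / (1 / 2)) = √(Real.pi / 2) * 2 := by
    rw [show Real.pi / (1 / 2) = Real.pi / 2 * 2 ^ 2 by ring, Real.sqrt_mul (by positivity),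
      Real.sqrt_sq zero_le_two]
  rw [hfun, integral_gaussian_Ioi, hsqrt, mul_div_cancel_right₀ _ two_ne_zero]

theorem setIntegral_Ioi_gaussFun_succ (c : ℕ) : ∫ x in Set.Ioi 0, gaussFun (c + 1) x = 0 := by
  have hderiv := hasDerivAt_mul_exp_mul_neg_sq_pow c
  have hint := (integrable_gaussFun (c + 1)).integrableOn (s := Set.Ioi 0)
  have hlim := tendsto_zero_of_hasDerivAt_of_integrableOn_Ioi (fun x _ => hderiv x) hint
    (integrable_mul_exp_mul_neg_sq_pow c).integrableOn
  simpa using integral_Ioi_of_hasDerivAt_of_tendsto' (fun x _ => hderiv x) hint hlim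

theorem setIntegral_Ioc_gaussFun_succ (c : ℕ) {b : ℝ} (hb : 0 ≤ b) :
    ∫ x in Set.Ioc 0 b, gaussFun (c + 1) x = b * Real.exp (-b ^ 2 / 2) * (-b ^ 2) ^ c := by
  rw [← intervalIntegral.integral_of_le hb, intervalIntegral.integral_eq_sub_of_hasDerivAt
    (fun x _ => hasDerivAt_mul_exp_mul_neg_sq_pow c x) (integrable_gaussFun _).intervalIntegrable]
  simp

theorem det_setIntegral_positiveInitial_gaussFun {m : ℕ} {s : ℕ → ℝ}
    (hs : ∀ k < m, 0 ≤ s (k + 1)) :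
    (Matrix.of fun c i : Fin (m + 1) => ∫ x in positiveInitial s i, gaussFun c x).det =
      √(Real.pi / 2) * ((∏ k : Fin m, s (k + 1) * Real.exp (-(s (k + 1)) ^ 2 / 2)) *
        ∏ k : Fin m, ∏ j ∈ Finset.Iio k, ((s (j + 1)) ^ 2 - (s (k + 1)) ^ 2)) := by
  have hvandermonde := prod_mul_prod_prod_Iio_sub_eq_det_pow
    (fun k : Fin m => s (k + 1) * Real.exp (-(s (k + 1)) ^ 2 / 2)) fun k => -(s (k + 1)) ^ 2
  simp only [neg_sub_neg] at hvandermonde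
  rw [det_of_col_zero_succ_eq_zero _ fun c => setIntegral_Ioi_gaussFun_succ c, hvandermonde]
  congr 1
  · exact setIntegral_Ioi_gaussFun_zero
  · congr 1
    ext c k
    exact setIntegral_Ioc_gaussFun_succ c (hs k k.2)

end Gauss

/-- Gauss case, odd order.  Integrating
`∏_{k=1}^{m+1} e^{-t_k²/2} ∏_{j<k}(t_j² - t_k²)` over the interlacing box
`t₁ ∈ (s₁,∞), t_k ∈ (s_k, s_{k-1}) (2 ≤ k ≤ m), t_{m+1} ∈ (0, s_m)` yields
`√(π/2) ∏ s_k e^{-s_k²/2} ∏_{j<k}(s_j² - s_k²)`. -/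
theorem gauss_odd_integrate_odd (m : ℕ) (hm : 1 ≤ m) (s : ℕ → ℝ)
    (hdec : ∀ i, 1 ≤ i → i < m → s (i + 1) ≤ s i) (hsm : 0 ≤ s m) :
    (∫ t in {t : Fin (m + 1) → ℝ | ∀ i : Fin (m + 1),
        (if (i : ℕ) < m then s ((i : ℕ) + 1) else 0) < t i ∧
          (0 < (i : ℕ) → t i < s (i : ℕ))},
      (∏ k : Fin (m + 1), Real.exp (-(t k) ^ 2 / 2)) *
        ∏ k : Fin (m + 1), ∏ j ∈ Finset.Iio k, ((t j) ^ 2 - (t k) ^ 2)) =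
    Real.sqrt (Real.pi / 2) *
      (∏ k ∈ Finset.Icc 1 m, s k * Real.exp (-(s k) ^ 2 / 2)) *
      ∏ k ∈ Finset.Icc 1 m, ∏ j ∈ Finset.Ico 1 k, ((s j) ^ 2 - (s k) ^ 2) := by
  have hanti : AntitoneOn s (Set.Icc 1 m) :=
    antitoneOn_of_succ_le Set.ordConnected_Icc fun i _ hi hi' => hdec i hi.1 hi'.2
  have hnonneg (k) (hk : k < m) : 0 ≤ s (k + 1) :=
    hsm.trans (hanti ⟨k.succ_pos, hk⟩ ⟨hm, le_rfl⟩ hk)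
  have hbox : {t : Fin (m + 1) → ℝ | ∀ i : Fin (m + 1),
        (if (i : ℕ) < m then s ((i : ℕ) + 1) else 0) < t i ∧ (0 < (i : ℕ) → t i < s (i : ℕ))} =
      Set.univ.pi fun i : Fin (m + 1) => interlacingInterval m s i := by
    ext t
    simp [interlacingInterval]
  have hdet := setIntegral_pi_det_of_ae_eq_sdiff (μ := volume)
    (I := fun i => interlacingInterval m s i) (fun c : Fin (m + 1) => gaussFun c)
    (fun c => (integrable_gaussFun c).integrableOn) (fun i => measurableSet_positiveInitial s i)
    (antitone_positiveInitial hanti) (interlacingInterval_self_ae_eq m s)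
    fun k => interlacingInterval_ae_eq_sdiff k.2 (hnonneg k k.2)
  simp_rw [hbox, prod_exp_mul_prod_prod_Iio_sub_eq_det_gaussFun, volume_pi,
    prod_Icc_one_eq_prod_fin, prod_Ico_one_eq_prod_Iio]
  rw [hdet, det_setIntegral_positiveInitial_gaussFun hnonneg, mul_assoc]
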